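/- arXiv:1610.09338 — 2 statements merged into one kernel-verified Lean document; each statement's English description precedes it below -/
import Mathlib

section
/- Let α ≥ 0, d > 0, k > 0, γ > 0, h₀ > 0, T_∞ > 0, and let ν be the unique positive solution of h₀T_∞/(γ2^α d^{(α+1)/2}) = ν^{α+1}[M(α/2+1/2,1/2,ν²) + 2(√d h₀/k)ν M(α/2+1,3/2,ν²)]. Define T₀ = 2√d h₀ T_∞ ν M(−α/2+1/2,3/2,−ν²) / [ k M(−α/2,1/2,−ν²) + 2√d h₀ ν M(−α/2+1/2,3/2,−ν²) ]. Then ν is also the unique positive solution of the equation k T₀/(2^{α+1} d^{α/2+1} γ) = μ^{α+2} M(α/2+1,3/2,μ²); i.e., the free-boundary coefficients of problems (P1) (convective condition with data h₀, T_∞) and (P2) (temperature condition with datum T₀) coincide. -/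
/-!
Kummer's transformation turns the two functions of argument `-ν²` in the definition of `T₀` into
functions of argument `ν²`, all with the common factor `exp (-ν²)`, which cancels in the quotient.
The denominator of `T₀` then becomes the bracket of the equation satisfied by `ν` in the
convective problem, so that equation collapses `k T₀ / (2 ^ (α + 1) d ^ (α / 2 + 1) γ)` to
`ν ^ (α + 2) M(α / 2 + 1, 3 / 2, ν²)`. Uniqueness holds because
`μ ↦ μ ^ (α + 2) M(α / 2 + 1, 3 / 2, μ²)` is strictly increasing on `(0, ∞)`, the Kummer series
having positive coefficients.

Kummer's transformation (`kummerM_mul_exp`) is the Cauchy product of the series of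
`M(b - a, b, -z)` with that of `exp z`; the identity between coefficients is the Chu–Vandermonde
identity `sum_choose_ascPochhammer`.
-/

open Real Filter Topology

/-- The Kummer confluent hypergeometric function `M(a,b,z)`, defined by its power series. -/
noncomputable def kummerM (a b z : ℝ) : ℝ :=
  ∑' s : ℕ, ((ascPochhammer ℝ s).eval a / ((ascPochhammer ℝ s).eval b * (Nat.factorial s : ℝ)))
      * z ^ s

/-- Splitting of a rising factorial: `(b)_i (b + i)_j = (b)_{i + j}`. -/
lemma ascPochhammer_eval_add (b : ℝ) (i j : ℕ) :
    (ascPochhammer ℝ i).eval b * (ascPochhammer ℝ j).eval (b + i)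
      = (ascPochhammer ℝ (i + j)).eval b := by
  induction j with
  | zero => simp
  | succ j ih =>
    rw [← add_assoc, ascPochhammer_succ_eval, ascPochhammer_succ_eval, ← ih]
    push_cast
    ring

lemma ascPochhammer_succ_eval_left (c : ℝ) (i : ℕ) :
    (ascPochhammer ℝ (i + 1)).eval c = c * (ascPochhammer ℝ i).eval (c + 1) := by
  have h := ascPochhammer_eval_add c 1 i
  simp only [ascPochhammer_one, Polynomial.eval_X, Nat.cast_one] at h
  rw [h, add_comm]

/-- The Chu–Vandermonde identity for rising factorials. -/
lemma sum_choose_ascPochhammer (n : ℕ) : ∀ b c : ℝ,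
    ∑ ij ∈ Finset.HasAntidiagonal.antidiagonal n, (n.choose ij.1 : ℝ) *
        ((-1) ^ ij.1 * (ascPochhammer ℝ ij.1).eval c * (ascPochhammer ℝ ij.2).eval (b + ij.1))
      = (ascPochhammer ℝ n).eval (b - c) := by
  induction n with
  | zero => intro b c; simp
  | succ n ih =>
    intro b c
    rw [Finset.sum_antidiagonal_choose_succ_mul (fun i j : ℕ =>
      (-1 : ℝ) ^ i * (ascPochhammer ℝ i).eval c * (ascPochhammer ℝ j).eval (b + i)) n]
    have h1 : ∑ ij ∈ Finset.HasAntidiagonal.antidiagonal n, (n.choose ij.1 : ℝ) *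
        ((-1) ^ ij.1 * (ascPochhammer ℝ ij.1).eval c *
          (ascPochhammer ℝ (ij.2 + 1)).eval (b + ij.1))
        = (b + n) * (ascPochhammer ℝ n).eval (b - c) := by
      rw [← ih b c, Finset.mul_sum]
      refine Finset.sum_congr rfl fun ij hij => ?_
      have hn : (n : ℝ) = ij.1 + ij.2 := by
        rw [← Finset.HasAntidiagonal.mem_antidiagonal.mp hij]; push_cast; ring
      rw [ascPochhammer_succ_eval, hn]
      ring
    -- Peeling off the factor `c` of `(c)_{i + 1}` gives the same sum for `b + 1` and `c + 1`.
    have h2 : ∑ ij ∈ Finset.HasAntidiagonal.antidiagonal n, (n.choose ij.2 : ℝ) *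
        ((-1) ^ (ij.1 + 1) * (ascPochhammer ℝ (ij.1 + 1)).eval c *
          (ascPochhammer ℝ ij.2).eval (b + (ij.1 + 1 : ℕ)))
        = -c * (ascPochhammer ℝ n).eval (b - c) := by
      have h := ih (b + 1) (c + 1)
      rw [add_sub_add_right_eq_sub] at h
      rw [← h, Finset.mul_sum]
      refine Finset.sum_congr rfl fun ij hij => ?_
      rw [ascPochhammer_succ_eval_left,
        ← Nat.choose_symm_of_eq_add (Finset.HasAntidiagonal.mem_antidiagonal.mp hij).symm,
        show b + ((ij.1 + 1 : ℕ) : ℝ) = b + 1 + ij.1 by push_cast; ring]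
      ring
    rw [h1, h2, ascPochhammer_succ_eval]
    ring

/-- The bound `|a + s| ≤ (|a| / b + 1) (b + s)`, applied to each factor. -/
lemma abs_ascPochhammer_le (a : ℝ) {b : ℝ} (hb : 0 < b) (s : ℕ) :
    |(ascPochhammer ℝ s).eval a| ≤ (|a| / b + 1) ^ s * (ascPochhammer ℝ s).eval b := by
  induction s with
  | zero => simp
  | succ s ih =>
    rw [ascPochhammer_succ_eval, ascPochhammer_succ_eval, abs_mul]
    have hs : |a + s| ≤ (|a| / b + 1) * (b + s) := by
      have h1 : |a + s| ≤ |a| + s := by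
        simpa using abs_add_le a (s : ℝ)
      have h2 : (|a| / b + 1) * (b + s) = |a| + s + (b + |a| / b * s) := by
        field_simp
        ring
      rw [h2]
      have : 0 ≤ b + |a| / b * s := by positivity
      linarith
    have hp := ascPochhammer_pos s b hb
    calc _ ≤ ((|a| / b + 1) ^ s * (ascPochhammer ℝ s).eval b) * ((|a| / b + 1) * (b + s)) := by
          gcongr
      _ = _ := by ring

lemma kummerM_summable_norm (a : ℝ) {b : ℝ} (hb : 0 < b) (z : ℝ) :
    Summable fun s : ℕ => ‖((ascPochhammer ℝ s).eval a /
      ((ascPochhammer ℝ s).eval b * (Nat.factorial s : ℝ))) * z ^ s‖ := by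
  refine Summable.of_nonneg_of_le (fun _ => norm_nonneg _) (fun s => ?_)
    (Real.summable_pow_div_factorial ((|a| / b + 1) * |z|))
  have hp := ascPochhammer_pos s b hb
  have hf : (0 : ℝ) < (Nat.factorial s : ℝ) := by positivity
  have h := abs_ascPochhammer_le a hb s
  rw [Real.norm_eq_abs, abs_mul, abs_div, abs_pow, abs_of_pos (mul_pos hp hf), mul_pow,
    div_mul_eq_mul_div, div_le_div_iff₀ (mul_pos hp hf) hf]
  calc _ ≤ (((|a| / b + 1) ^ s * (ascPochhammer ℝ s).eval b) * |z| ^ s)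
          * (Nat.factorial s : ℝ) := by gcongr
    _ = _ := by ring

/-- Kummer's transformation. -/
lemma kummerM_mul_exp (a : ℝ) {b : ℝ} (hb : 0 < b) (z : ℝ) :
    kummerM (b - a) b (-z) * Real.exp z = kummerM a b z := by
  have hexp : Real.exp z = ∑' n : ℕ, z ^ n / (Nat.factorial n : ℝ) := by
    rw [Real.exp_eq_exp_ℝ, NormedSpace.exp_eq_tsum_div]
  rw [hexp, kummerM, kummerM, tsum_mul_tsum_eq_tsum_sum_antidiagonal_of_summable_norm
    (kummerM_summable_norm (b - a) hb (-z)) (Real.summable_pow_div_factorial z).norm]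
  refine tsum_congr fun n => ?_
  have h := sum_choose_ascPochhammer n b (b - a)
  rw [sub_sub_cancel] at h
  rw [← h, Finset.sum_div, Finset.sum_mul]
  refine Finset.sum_congr rfl fun ij hij => ?_
  obtain ⟨i, j⟩ := ij
  obtain rfl : i + j = n := Finset.HasAntidiagonal.mem_antidiagonal.mp hij
  have hi := (ascPochhammer_pos i b hb).ne'
  have hj := (ascPochhammer_pos j (b + i) (by positivity)).ne'
  simp only
  rw [← ascPochhammer_eval_add, Nat.choose_symm_add, ← Nat.add_choose_mul_factorial_mul_factorial i j, neg_pow z i]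
  have hc : ((i + j).choose j : ℝ) ≠ 0 :=
    Nat.cast_ne_zero.mpr (Nat.choose_pos (Nat.le_add_left j i)).ne'
  push_cast
  field_simp
  ring

lemma kummerM_coeff_pos {a b : ℝ} (ha : 0 < a) (hb : 0 < b) (s : ℕ) :
    0 < (ascPochhammer ℝ s).eval a / ((ascPochhammer ℝ s).eval b * (Nat.factorial s : ℝ)) :=
  div_pos (ascPochhammer_pos s a ha)
    (mul_pos (ascPochhammer_pos s b hb) (by positivity))

lemma kummerM_pos {a b z : ℝ} (ha : 0 < a) (hb : 0 < b) (hz : 0 ≤ z) : 0 < kummerM a b z :=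
  (kummerM_summable_norm a hb z).of_norm.tsum_pos
    (fun s => mul_nonneg (kummerM_coeff_pos ha hb s).le (pow_nonneg hz s)) 0 (by simp)

lemma kummerM_mono {a b z w : ℝ} (ha : 0 < a) (hb : 0 < b) (hz : 0 ≤ z) (hzw : z ≤ w) :
    kummerM a b z ≤ kummerM a b w := by
  refine Summable.tsum_le_tsum (fun s => ?_) (kummerM_summable_norm a hb z).of_norm
    (kummerM_summable_norm a hb w).of_norm
  have := kummerM_coeff_pos ha hb s
  gcongr

lemma strictMonoOn_rpow_mul_kummerM {α a b : ℝ} (hα : 0 ≤ α) (ha : 0 < a) (hb : 0 < b) :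
    StrictMonoOn (fun μ : ℝ => μ ^ (α + 2) * kummerM a b (μ ^ 2)) (Set.Ioi 0) := by
  intro x hx y hy hxy
  rw [Set.mem_Ioi] at hx hy
  exact mul_lt_mul (Real.rpow_lt_rpow hx.le hxy (by linarith))
    (kummerM_mono ha hb (by positivity) (by gcongr)) (kummerM_pos ha hb (by positivity))
    (by positivity)

/-- the free-boundary coefficients of problems (P1) and (P2) coincide
when `T₀` is defined from the data of (P1). -/
theorem P1_equiv_P2 (α d k γ h₀ Tinf ν : ℝ)
    (hα : 0 ≤ α) (hd : 0 < d) (hk : 0 < k) (hγ : 0 < γ) (hh : 0 < h₀) (hT : 0 < Tinf)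
    (hν : 0 < ν)
    (hνeq : h₀ * Tinf / (γ * 2 ^ α * d ^ ((α + 1) / 2))
      = ν ^ (α + 1) * (kummerM (α / 2 + 1 / 2) (1 / 2) (ν ^ 2)
          + 2 * (Real.sqrt d * h₀ / k) * ν * kummerM (α / 2 + 1) (3 / 2) (ν ^ 2)))
    (T₀ : ℝ)
    (hT₀ : T₀ = 2 * Real.sqrt d * h₀ * Tinf * ν * kummerM (-α / 2 + 1 / 2) (3 / 2) (-ν ^ 2)
      / (k * kummerM (-α / 2) (1 / 2) (-ν ^ 2)
          + 2 * Real.sqrt d * h₀ * ν * kummerM (-α / 2 + 1 / 2) (3 / 2) (-ν ^ 2))) :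
    (k * T₀ / (2 ^ (α + 1) * d ^ (α / 2 + 1) * γ)
        = ν ^ (α + 2) * kummerM (α / 2 + 1) (3 / 2) (ν ^ 2))
      ∧ ∀ μ : ℝ, 0 < μ →
          k * T₀ / (2 ^ (α + 1) * d ^ (α / 2 + 1) * γ)
            = μ ^ (α + 2) * kummerM (α / 2 + 1) (3 / 2) (μ ^ 2) → μ = ν := by
  have key : k * T₀ / (2 ^ (α + 1) * d ^ (α / 2 + 1) * γ)
      = ν ^ (α + 2) * kummerM (α / 2 + 1) (3 / 2) (ν ^ 2) := by
    have hK1 := kummerM_mul_exp (-α / 2) (show (0 : ℝ) < 1 / 2 by norm_num) (-ν ^ 2)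
    have hK2 := kummerM_mul_exp (-α / 2 + 1 / 2) (show (0 : ℝ) < 3 / 2 by norm_num) (-ν ^ 2)
    rw [neg_neg, show (1 : ℝ) / 2 - -α / 2 = α / 2 + 1 / 2 by ring] at hK1
    rw [neg_neg, show (3 : ℝ) / 2 - (-α / 2 + 1 / 2) = α / 2 + 1 by ring] at hK2
    have hA : 0 < kummerM (α / 2 + 1 / 2) (1 / 2) (ν ^ 2) :=
      kummerM_pos (by positivity) (by norm_num) (by positivity)
    have hB : 0 < kummerM (α / 2 + 1) (3 / 2) (ν ^ 2) :=
      kummerM_pos (by positivity) (by norm_num) (by positivity)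
    rw [← hK1, ← hK2] at hT₀
    generalize kummerM (α / 2 + 1 / 2) (1 / 2) (ν ^ 2) = A at *
    generalize kummerM (α / 2 + 1) (3 / 2) (ν ^ 2) = B at *
    have hE := Real.exp_pos (-ν ^ 2)
    generalize Real.exp (-ν ^ 2) = E at *
    -- Splitting the exponents leaves `d ^ ((α + 1) / 2)`, `2 ^ α`, `ν ^ (α + 1)` as the only
    -- real powers.
    have hd2 : d ^ (α / 2 + 1) = d ^ ((α + 1) / 2) * √d := by
      rw [Real.sqrt_eq_rpow, ← Real.rpow_add hd]
      ring_nf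
    have h22 : (2 : ℝ) ^ (α + 1) = 2 ^ α * 2 := Real.rpow_add_one two_ne_zero α
    have hν2 : ν ^ (α + 2) = ν ^ (α + 1) * ν := by
      rw [← Real.rpow_add_one hν.ne']
      ring_nf
    rw [hd2, h22, hν2]
    have hs := Real.sqrt_pos.mpr hd
    have hD := Real.rpow_pos_of_pos hd ((α + 1) / 2)
    have hP := Real.rpow_pos_of_pos (two_pos : (0 : ℝ) < 2) α
    have hN := Real.rpow_pos_of_pos hν (α + 1)
    generalize √d = s at *
    generalize d ^ ((α + 1) / 2) = D at *
    generalize (2 : ℝ) ^ α = P at *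
    generalize ν ^ (α + 1) = N at *
    have hden : 0 < k * A + 2 * s * h₀ * ν * B := by positivity
    have hquot : T₀ = 2 * s * h₀ * Tinf * ν * B / (k * A + 2 * s * h₀ * ν * B) := by
      rw [hT₀, show k * (A * E) + 2 * s * h₀ * ν * (B * E)
          = (k * A + 2 * s * h₀ * ν * B) * E by ring,
        ← mul_assoc _ B E, mul_div_mul_right _ _ hE.ne']
    have hconv : h₀ * Tinf * k = γ * P * D * N * (k * A + 2 * s * h₀ * ν * B) := by
      rw [div_eq_iff (by positivity)] at hνeq
      rw [hνeq]
      field_simp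
    rw [hquot, div_eq_iff (by positivity), mul_div_assoc', div_eq_iff hden.ne']
    linear_combination (2 * s * ν * B) * hconv
  refine ⟨key, fun μ hμ h => ?_⟩
  exact (strictMonoOn_rpow_mul_kummerM hα (by positivity) (by norm_num)).injOn hμ hν
    (h.symm.trans key)
end

section
/- Let d > 0, ν > 0, α ≥ 0, and let c₁₁, c₂₁ be real constants with c₁₁ = −ν M(−α/2+1/2, 3/2, −ν²) c₂₁ / M(−α/2, 1/2, −ν²) (assuming M(−α/2,1/2,−ν²) ≠ 0). Define Ψ(x,t) = t^{α/2}[ c₁₁ M(−α/2, 1/2, −η²) + c₂₁ η M(−α/2+1/2, 3/2, −η²) ] with η = x/(2√(dt)) and s(t) = 2ν√(dt). Then Ψ satisfies the heat equation Ψ_t = dΨ_xx on {0 < x < s(t), t > 0}, the interface condition Ψ(s(t),t) = 0 for all t > 0, and s(0) = 0. -/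
/-!
With `f η = c₁₁ M(-α/2, 1/2, -η²) + c₂₁ η M(-α/2 + 1/2, 3/2, -η²)` the candidate solution is
`Ψ(x, t) = t^(α/2) f(x / (2√(dt)))`. The chain rule turns `Ψ_t = d Ψ_xx` into
`f'' + 2 η f' - 2 α f = 0`, and the substitution `z = -η²` turns this equation, for each of the two
summands, into Kummer's equation `z M'' + (b - z) M' - a M = 0` with `b = 1/2` and `b = 3/2`.

Kummer's equation follows from the recurrence `(n + 1) (b + n) cₙ₊₁ = (a + n) cₙ` of the
coefficients by comparing power series. Termwise differentiation is justified by a bound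
`|cₙ| ≤ C Kⁿ / n!`, a class of coefficient sequences that is stable under formal differentiation.
The interface condition is the choice of `c₁₁`, since `η = ν` on `x = s(t)`.
-/

open Real Filter Topology

/-- The factorial bound making `∑ c n * z ^ n` an entire function of exponential type. -/
def FactorialBound (c : ℕ → ℝ) : Prop :=
  ∃ C K : ℝ, 0 ≤ C ∧ 0 ≤ K ∧ ∀ n, |c n| ≤ C * K ^ n / (n.factorial : ℝ)

/-- The coefficients of the formal derivative of the power series with coefficients `c`. -/
def shiftCoeff (c : ℕ → ℝ) (n : ℕ) : ℝ := (n + 1) * c (n + 1)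

lemma FactorialBound.shift {c : ℕ → ℝ} (h : FactorialBound c) :
    FactorialBound (shiftCoeff c) := by
  obtain ⟨C, K, hC, hK, h⟩ := h
  refine ⟨C * K, K, by positivity, hK, fun n => ?_⟩
  have h1 := h (n + 1)
  have hn : (0 : ℝ) < n + 1 := by positivity
  unfold shiftCoeff
  rw [abs_mul, abs_of_pos hn]
  calc ((n : ℝ) + 1) * |c (n + 1)|
      ≤ (n + 1) * (C * K ^ (n + 1) / ((n + 1).factorial : ℝ)) := by gcongr
    _ = C * K * K ^ n / (n.factorial : ℝ) := by
      rw [Nat.factorial_succ]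
      push_cast
      field_simp
      ring

lemma FactorialBound.summable {c : ℕ → ℝ} (h : FactorialBound c) (z : ℝ) :
    Summable fun n => c n * z ^ n := by
  obtain ⟨C, K, hC, hK, h⟩ := h
  refine Summable.of_norm_bounded ((Real.summable_pow_div_factorial (K * |z|)).mul_left C)
    fun n => ?_
  rw [Real.norm_eq_abs, abs_mul, abs_pow]
  calc |c n| * |z| ^ n ≤ (C * K ^ n / (n.factorial : ℝ)) * |z| ^ n := by
        gcongr
        exact h n
    _ = C * ((K * |z|) ^ n / (n.factorial : ℝ)) := by
        rw [mul_pow]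
        ring

lemma FactorialBound.hasDerivAt {c : ℕ → ℝ} (h : FactorialBound c) (z : ℝ) :
    HasDerivAt (fun y => ∑' n, c n * y ^ n) (∑' n, shiftCoeff c n * z ^ n) z := by
  have hs := h.shift
  have hsum := h.summable
  obtain ⟨C, K, hC, hK, h⟩ := hs
  set R : ℝ := |z| + 1 with hR
  -- Terms of the derived series are dominated on the ball of radius `R`, so the series may be
  -- differentiated term by term there.
  have hu : Summable fun n : ℕ => |c n| * (n * R ^ (n - 1)) := by
    rw [← summable_nat_add_iff 1]
    refine Summable.of_norm_bounded ((Real.summable_pow_div_factorial (K * R)).mul_left C)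
      fun n => ?_
    have hn : (0 : ℝ) < n + 1 := by positivity
    have hR0 : 0 ≤ R := by positivity
    have h1 := h n
    rw [shiftCoeff, abs_mul, abs_of_pos hn] at h1
    rw [Real.norm_of_nonneg (by positivity)]
    push_cast
    calc |c (n + 1)| * (((n : ℝ) + 1) * R ^ n) = ((n + 1) * |c (n + 1)|) * R ^ n := by ring
      _ ≤ (C * K ^ n / (n.factorial : ℝ)) * R ^ n := by gcongr
      _ = C * ((K * R) ^ n / (n.factorial : ℝ)) := by
        rw [mul_pow]
        ring
  have hz : z ∈ Metric.ball (0 : ℝ) R := by simp [hR]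
  have key := hasDerivAt_tsum_of_isPreconnected (g := fun n y => c n * y ^ n)
    (g' := fun n y => c n * (n * y ^ (n - 1))) hu Metric.isOpen_ball
    (convex_ball (0 : ℝ) R).isPreconnected
    (fun n y _ => (hasDerivAt_pow n y).const_mul (c n))
    (fun n y hy => by
      have hy' : |y| ≤ R := by
        have := Metric.mem_ball.1 hy
        rw [Real.dist_eq, sub_zero] at this
        exact this.le
      rw [Real.norm_eq_abs, abs_mul, abs_mul, abs_pow, Nat.abs_cast]
      gcongr) hz (hsum z) hz
  refine key.congr_deriv ?_
  have hsg : Summable fun n : ℕ => c n * (n * z ^ (n - 1)) := by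
    refine Summable.of_norm_bounded hu fun n => ?_
    rw [Real.norm_eq_abs, abs_mul, abs_mul, abs_pow, Nat.abs_cast]
    gcongr
    simp [hR]
  rw [hsg.tsum_eq_zero_add]
  simp only [shiftCoeff, Nat.cast_zero, zero_mul, mul_zero, zero_add, Nat.cast_add, Nat.cast_one,
    Nat.add_sub_cancel]
  exact tsum_congr fun n => by ring

/-- The coefficient of `z ^ n` in `kummerM a b z`. -/
noncomputable def kummerCoeff (a b : ℝ) (n : ℕ) : ℝ :=
  (ascPochhammer ℝ n).eval a / ((ascPochhammer ℝ n).eval b * (n.factorial : ℝ))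

lemma kummerCoeff_succ {a b : ℝ} (hb : 0 < b) (n : ℕ) :
    (n + 1) * (b + n) * kummerCoeff a b (n + 1) = (a + n) * kummerCoeff a b n := by
  have h1 : (ascPochhammer ℝ n).eval b ≠ 0 := (ascPochhammer_pos n b hb).ne'
  have h2 : b + n ≠ 0 := by positivity
  unfold kummerCoeff
  rw [Nat.factorial_succ, ascPochhammer_succ_eval, ascPochhammer_succ_eval]
  push_cast
  field_simp

lemma kummerCoeff_bound {a b : ℝ} (hb : 0 < b) : FactorialBound (kummerCoeff a b) := by
  refine ⟨1, |a| / b + 1, zero_le_one, by positivity, fun n => ?_⟩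
  induction n with
  | zero => simp [kummerCoeff]
  | succ n ih =>
    have hbn : 0 < b + n := by positivity
    have hn : (0 : ℝ) < n + 1 := by positivity
    have hrec := congrArg abs (kummerCoeff_succ (a := a) hb n)
    rw [abs_mul, abs_mul, abs_mul, abs_of_pos hbn, abs_of_pos hn] at hrec
    -- The ratio `|a + n| / (b + n)` is at most `|a| / b + 1`, uniformly in `n`.
    have hratio : |a + n| ≤ (|a| / b + 1) * (b + n) := by
      have e : (|a| / b + 1) * (b + n) = |a| + n + (|a| / b * n + b) := by
        field_simp
        ring
      have h1 : |a + n| ≤ |a| + n := by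
        simpa using abs_add_le a (n : ℝ)
      have h2 : 0 ≤ |a| / b * n + b := by positivity
      rw [e]
      linarith
    have hle : (n + 1) * (b + n) * |kummerCoeff a b (n + 1)| ≤
        (|a| / b + 1) * (b + n) * (1 * (|a| / b + 1) ^ n / (n.factorial : ℝ)) := by
      rw [hrec]
      gcongr
    have hfin : (|a| / b + 1) * (b + n) * (1 * (|a| / b + 1) ^ n / (n.factorial : ℝ)) =
        (n + 1) * (b + n) * (1 * (|a| / b + 1) ^ (n + 1) / ((n + 1).factorial : ℝ)) := by
      rw [Nat.factorial_succ, pow_succ]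
      push_cast
      generalize |a| / b + 1 = K
      field_simp
    rw [hfin] at hle
    exact le_of_mul_le_mul_left hle (by positivity)

/-- Kummer's differential equation, with `M1` and `M2` the first two derivatives of `M(a, b, ·)`. -/
lemma kummerM_ode (a : ℝ) {b : ℝ} (hb : 0 < b) : ∃ M1 M2 : ℝ → ℝ,
    (∀ z, HasDerivAt (kummerM a b) (M1 z) z) ∧ (∀ z, HasDerivAt M1 (M2 z) z) ∧
      ∀ z, z * M2 z + (b - z) * M1 z - a * kummerM a b z = 0 := by
  have h0 := kummerCoeff_bound (a := a) hb
  set c := kummerCoeff a b with hc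
  have h1 := h0.shift
  have h2 := h1.shift
  refine ⟨fun z => ∑' n, shiftCoeff c n * z ^ n,
    fun z => ∑' n, shiftCoeff (shiftCoeff c) n * z ^ n,
    fun z => h0.hasDerivAt z, fun z => h1.hasDerivAt z, fun z => ?_⟩
  have s0 : HasSum (fun n => c n * z ^ n) (kummerM a b z) := (h0.summable z).hasSum
  have s1 := (h1.summable z).hasSum
  have s2 := (h2.summable z).hasSum
  -- Multiplying a series by `z` shifts it by one; the new constant term carries a factor `n = 0`.
  have t1 : HasSum (fun n : ℕ => n * c n * z ^ n) (z * ∑' n, shiftCoeff c n * z ^ n) := by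
    rw [← hasSum_nat_add_iff' 1]
    simp only [Finset.range_one, Finset.sum_singleton, Nat.cast_zero, zero_mul, sub_zero]
    refine (s1.mul_left z).congr_fun ?_
    intro n
    simp only [shiftCoeff]
    push_cast
    ring
  have t2 : HasSum (fun n : ℕ => n * shiftCoeff c n * z ^ n)
      (z * ∑' n, shiftCoeff (shiftCoeff c) n * z ^ n) := by
    rw [← hasSum_nat_add_iff' 1]
    simp only [Finset.range_one, Finset.sum_singleton, Nat.cast_zero, zero_mul, sub_zero]
    refine (s2.mul_left z).congr_fun ?_
    intro n
    simp only [shiftCoeff]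
    push_cast
    ring
  have tot := ((t2.add (s1.mul_left b)).sub t1).sub (s0.mul_left a)
  have hz : (fun n : ℕ => n * shiftCoeff c n * z ^ n + b * (shiftCoeff c n * z ^ n)
      - n * c n * z ^ n - a * (c n * z ^ n)) = fun _ => 0 := by
    funext n
    have := kummerCoeff_succ (a := a) hb n
    rw [← hc] at this
    simp only [shiftCoeff]
    linear_combination z ^ n * this
  rw [hz] at tot
  have := tot.unique hasSum_zero
  linear_combination this

/-- The similarity profile: any combination of the two Kummer solutions is twice differentiable and
solves `f'' + 2 η f' - 2 α f = 0`. -/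
lemma profile_ode (α c₁ c₂ : ℝ) (f : ℝ → ℝ)
    (hf : ∀ η, f η = c₁ * kummerM (-α / 2) (1 / 2) (-η ^ 2)
      + c₂ * η * kummerM (-α / 2 + 1 / 2) (3 / 2) (-η ^ 2)) :
    ∃ f1 f2 : ℝ → ℝ, (∀ η, HasDerivAt f (f1 η) η) ∧ (∀ η, HasDerivAt f1 (f2 η) η) ∧
      ∀ η, f2 η + 2 * η * f1 η - 2 * α * f η = 0 := by
  obtain ⟨M1, M2, hM, hM1, eM⟩ := kummerM_ode (-α / 2) (b := 1 / 2) (by norm_num)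
  obtain ⟨N1, N2, hN, hN1, eN⟩ := kummerM_ode (-α / 2 + 1 / 2) (b := 3 / 2) (by norm_num)
  have hf' : f = fun η => c₁ * kummerM (-α / 2) (1 / 2) (-η ^ 2)
      + c₂ * η * kummerM (-α / 2 + 1 / 2) (3 / 2) (-η ^ 2) := funext hf
  have hsq (η : ℝ) : HasDerivAt (fun y : ℝ => -y ^ 2) (-(2 * η)) η := by
    simpa using (hasDerivAt_pow 2 η).fun_neg
  have hid (c η : ℝ) : HasDerivAt (fun y : ℝ => c * y) c η := by
    simpa using (hasDerivAt_id η).const_mul c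
  have comp {g : ℝ → ℝ} {g' : ℝ → ℝ} (hg : ∀ z, HasDerivAt g (g' z) z) (η : ℝ) :
      HasDerivAt (fun y => g (-y ^ 2)) (g' (-η ^ 2) * -(2 * η)) η :=
    HasDerivAt.comp η (hg _) (hsq η)
  refine ⟨fun η => (-2 * c₁) * η * M1 (-η ^ 2) + c₂ * kummerM (-α / 2 + 1 / 2) (3 / 2) (-η ^ 2)
      + 2 * c₂ * (-η ^ 2) * N1 (-η ^ 2),
    fun η => c₁ * (-2 * M1 (-η ^ 2) + 4 * η ^ 2 * M2 (-η ^ 2))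
      + c₂ * (-6 * η * N1 (-η ^ 2) + 4 * η ^ 3 * N2 (-η ^ 2)), fun η => ?_, fun η => ?_,
    fun η => ?_⟩
  · rw [hf']
    refine (((comp hM η).const_mul c₁).fun_add ((hid c₂ η).fun_mul (comp hN η))).congr_deriv ?_
    ring
  · refine ((((hid (-2 * c₁) η).fun_mul (comp hM1 η)).fun_add
      ((comp hN η).const_mul c₂)).fun_add
      (((hsq η).const_mul (2 * c₂)).fun_mul (comp hN1 η))).congr_deriv ?_
    ring
  · rw [hf]
    linear_combination (-4 * c₁) * eM (-η ^ 2) + (-4 * c₂ * η) * eN (-η ^ 2)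

/-- the similarity-type function `Ψ` built from Kummer functions satisfies
the heat equation, the interface condition, and `s(0) = 0`. -/
theorem similarity_solution_satisfies (d ν α : ℝ) (hd : 0 < d) (hν : 0 < ν) (hα : 0 ≤ α)
    (c₁₁ c₂₁ : ℝ)
    (hM : kummerM (-α / 2) (1 / 2) (-ν ^ 2) ≠ 0)
    (hc : c₁₁ = -ν * kummerM (-α / 2 + 1 / 2) (3 / 2) (-ν ^ 2) * c₂₁
      / kummerM (-α / 2) (1 / 2) (-ν ^ 2))
    (Ψ : ℝ → ℝ → ℝ)
    (hΨ : ∀ x t : ℝ, Ψ x t = t ^ (α / 2) *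
      (c₁₁ * kummerM (-α / 2) (1 / 2) (-(x / (2 * Real.sqrt (d * t))) ^ 2)
        + c₂₁ * (x / (2 * Real.sqrt (d * t)))
            * kummerM (-α / 2 + 1 / 2) (3 / 2) (-(x / (2 * Real.sqrt (d * t))) ^ 2)))
    (s : ℝ → ℝ) (hs : ∀ t : ℝ, s t = 2 * ν * Real.sqrt (d * t)) :
    (∀ x t : ℝ, 0 < t → 0 < x → x < s t →
        deriv (fun τ => Ψ x τ) t = d * deriv (deriv (fun y => Ψ y t)) x)
      ∧ (∀ t : ℝ, 0 < t → Ψ (s t) t = 0)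
      ∧ s 0 = 0 := by
  refine ⟨fun x t ht _ _ => ?_, fun t ht => ?_, by simp [hs]⟩
  · obtain ⟨f, hf⟩ : ∃ f : ℝ → ℝ, ∀ η, f η = c₁₁ * kummerM (-α / 2) (1 / 2) (-η ^ 2)
        + c₂₁ * η * kummerM (-α / 2 + 1 / 2) (3 / 2) (-η ^ 2) := ⟨_, fun _ => rfl⟩
    have hΨf (x t : ℝ) : Ψ x t = t ^ (α / 2) * f (x / (2 * Real.sqrt (d * t))) := by
      rw [hΨ, hf]
    obtain ⟨f1, f2, h1, h2, ode⟩ := profile_ode α c₁₁ c₂₁ f hf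
    have hdt : 0 < d * t := by positivity
    obtain ⟨r, hr⟩ : ∃ r, r = Real.sqrt (d * t) := ⟨_, rfl⟩
    have hr0 : 0 < r := hr ▸ Real.sqrt_pos.2 hdt
    have hr2 : r ^ 2 = d * t := hr ▸ Real.sq_sqrt hdt.le
    have hη (y : ℝ) : HasDerivAt (fun y : ℝ => y / (2 * r)) (1 / (2 * r)) y :=
      (hasDerivAt_id y).div_const _
    have hx1 : deriv (fun y => Ψ y t) = fun y => t ^ (α / 2) * (f1 (y / (2 * r)) * (1 / (2 * r))) := by
      funext y
      simp only [hΨf, ← hr]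
      exact ((HasDerivAt.comp y (h1 _) (hη y)).const_mul _).deriv
    have hx2 : deriv (deriv (fun y => Ψ y t)) x =
        t ^ (α / 2) * (f2 (x / (2 * r)) * (1 / (2 * r)) * (1 / (2 * r))) := by
      rw [hx1]
      exact (((HasDerivAt.comp x (h2 _) (hη x)).mul_const _).const_mul _).deriv
    have hsqrt : HasDerivAt (fun τ => 2 * Real.sqrt (d * τ)) (2 * (d / (2 * r))) t := by
      have hl : HasDerivAt (fun τ : ℝ => d * τ) d t := by
        simpa using (hasDerivAt_id t).const_mul d
      rw [hr]
      exact (hl.sqrt hdt.ne').const_mul 2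
    have hηt : HasDerivAt (fun τ => x / (2 * Real.sqrt (d * τ))) (-(x / (2 * r)) / (2 * t)) t := by
      have := (hasDerivAt_const t x).fun_div hsqrt (by rw [← hr]; positivity)
      refine this.congr_deriv ?_
      rw [← hr]
      field_simp
      rw [hr2]
      ring
    have htd : deriv (fun τ => Ψ x τ) t = α / 2 * t ^ (α / 2 - 1) * f (x / (2 * r))
        + t ^ (α / 2) * (f1 (x / (2 * r)) * (-(x / (2 * r)) / (2 * t))) := by
      simp only [hΨf]
      have hc1 : HasDerivAt (fun τ => f (x / (2 * Real.sqrt (d * τ))))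
          (f1 (x / (2 * r)) * (-(x / (2 * r)) / (2 * t))) t := by
        rw [hr] at hηt ⊢
        exact HasDerivAt.comp t (h1 _) hηt
      have := ((Real.hasDerivAt_rpow_const (p := α / 2) (Or.inl ht.ne')).fun_mul hc1).deriv
      rw [this, ← hr]
    have ho := ode (x / (2 * r))
    rw [htd, hx2, Real.rpow_sub_one ht.ne']
    generalize x / (2 * r) = η at *
    have hd4 : d * (1 / (2 * r) * (1 / (2 * r))) = 1 / (4 * t) := by
      field_simp
      rw [hr2]
      ring
    have hR : d * (t ^ (α / 2) * (f2 η * (1 / (2 * r)) * (1 / (2 * r))))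
        = t ^ (α / 2) * f2 η * (1 / (4 * t)) := by
      rw [← hd4]
      ring
    rw [hR]
    field_simp
    linear_combination (-2 : ℝ) * ho
  · have hr0 : 0 < Real.sqrt (d * t) := Real.sqrt_pos.2 (by positivity)
    have hη : s t / (2 * Real.sqrt (d * t)) = ν := by
      rw [hs]
      field_simp
    rw [hΨ, hη, hc, div_mul_cancel₀ _ hM]
    ring
end
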